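/- (Asymptotic superiority of preconditioning.) For every y ∈ ℝ^{d_y}, let v_P ∈ ℝ^{d_x} be a unit vector with ‖D_xΩ^P(x⋆(y), y)[v_P]‖ = ‖D_xΩ^P(x⋆(y), y)‖_op, and set δ := ‖P(x⋆(y), y) − F_1(x⋆(y), y)‖_op. Then ‖D_xΩ^φ(x⋆(y), y)‖_op² − ‖D_xΩ^P(x⋆(y), y)‖_op² ≥ ‖D_xΩ^φ(x⋆(y), y)[v_P]‖² − ‖D_xΩ(x⋆(y), y)‖_op² · ‖P(x⋆(y), y)^{−1}‖_op² · δ². -/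

import Mathlib

/-!
Since `F = 0` at a root, the variation of `P⁻¹` does not enter the derivative of the step
`x̃ = x - P⁻¹ F`: it fixes the root and has derivative `1 - P⁻¹ F₁ = P⁻¹ (P - F₁)` there. By the
chain rule the derivative of `Ωᴾ = Ω ∘ x̃` is `DΩ ∘ P⁻¹ (P - F₁)`, of operator norm at most
`‖DΩ‖ ‖P⁻¹‖ δ`, while the derivative of the competing formula stretches a unit vector by at most
its operator norm.
-/

noncomputable section

open ContinuousLinearMap RealInnerProductSpace

abbrev E (n : ℕ) : Type := EuclideanSpace ℝ (Fin n)

variable {dx dy : ℕ}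

/-- Partial Fréchet derivative in the first variable. -/
def pd1 {k : ℕ} (G : E dx × E dy → E k) (x : E dx) (y : E dy) : E dx →L[ℝ] E k :=
  fderiv ℝ (fun x' => G (x', y)) x

/-- Partial Fréchet derivative in the second variable. -/
def pd2 {k : ℕ} (G : E dx × E dy → E k) (x : E dx) (y : E dy) : E dy →L[ℝ] E k :=
  fderiv ℝ (fun y' => G (x, y')) y

/-- Partial gradient in the first variable. -/
def grad1 (g : E dx × E dy → ℝ) (x : E dx) (y : E dy) : E dx :=
  gradient (fun x' => g (x', y)) x

/-- Partial gradient in the second variable. -/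
def grad2 (g : E dx × E dy → ℝ) (x : E dx) (y : E dy) : E dy :=
  gradient (fun y' => g (x, y')) y

/-- Ψ(x, y) = −F₂(x,y)^⊤ ∘ (F₁(x,y)^⊤)⁻¹. -/
def Psi (F : E dx × E dy → E dx) (x : E dx) (y : E dy) : E dx →L[ℝ] E dy :=
  -((adjoint (pd2 F x y)).comp (Ring.inverse (adjoint (pd1 F x y))))

/-- The IFT formula Ω(x,y) = g₂(x,y) + Ψ(x,y) g₁(x,y). -/
def Omega (F : E dx × E dy → E dx) (g : E dx × E dy → ℝ) (x : E dx) (y : E dy) : E dy :=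
  grad2 g x y + Psi F x y (grad1 g x y)

/-- φ₁₁(z,y)[w]: Hessian in z of z ↦ ⟪w, φ(z,y)⟫. -/
def phi11 (φ : E dx × E dy → E dx) (z : E dx) (y : E dy) (w : E dx) : E dx →L[ℝ] E dx :=
  fderiv ℝ (fun z' => gradient (fun z'' => ⟪w, φ (z'', y)⟫) z') z

/-- φ₂₁(z,y)[w]: mixed second derivative of (z,y) ↦ ⟪w, φ(z,y)⟫, an element of ℝ^{dx×dy}. -/
def phi21 (φ : E dx × E dy → E dx) (z : E dx) (y : E dy) (w : E dx) : E dy →L[ℝ] E dx :=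
  fderiv ℝ (fun y' => gradient (fun z' => ⟪w, φ (z', y')⟫) z) y

/-- Uᶠ(x,y) = F₂ + F₁ φ₂(z,y) + φ₁(z,y)⁻¹ (φ₂₁(z,y)[F(x,y)]), with z = φ(·,y)⁻¹(x). -/
def Uphi (F : E dx × E dy → E dx) (φ : E dx × E dy → E dx) (φinv : E dx × E dy → E dx)
    (x : E dx) (y : E dy) : E dy →L[ℝ] E dx :=
  pd2 F x y + (pd1 F x y).comp (pd2 φ (φinv (x, y)) y) +
    (Ring.inverse (pd1 φ (φinv (x, y)) y)).comp (phi21 φ (φinv (x, y)) y (F (x, y)))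

/-- Vᶠ(x,y) = (φ₁^⊤)⁻¹ (φ₁₁(z,y)[F(x,y)]) φ₁⁻¹ + F₁(x,y), with z = φ(·,y)⁻¹(x). -/
def Vphi (F : E dx × E dy → E dx) (φ : E dx × E dy → E dx) (φinv : E dx × E dy → E dx)
    (x : E dx) (y : E dy) : E dx →L[ℝ] E dx :=
  (Ring.inverse (adjoint (pd1 φ (φinv (x, y)) y))).comp
      ((phi11 φ (φinv (x, y)) y (F (x, y))).comp (Ring.inverse (pd1 φ (φinv (x, y)) y))) +
    pd1 F x y

/-- Ψᶠ(x,y) = φ₂(z,y)^⊤ − Uᶠ(x,y)^⊤ (Vᶠ(x,y)^⊤)⁻¹. -/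
def Psiphi (F : E dx × E dy → E dx) (φ : E dx × E dy → E dx) (φinv : E dx × E dy → E dx)
    (x : E dx) (y : E dy) : E dx →L[ℝ] E dy :=
  adjoint (pd2 φ (φinv (x, y)) y) -
    (adjoint (Uphi F φ φinv x y)).comp (Ring.inverse (adjoint (Vphi F φ φinv x y)))

/-- The reparameterized formula Ωᶠ(x,y) = g₂(x,y) + Ψᶠ(x,y) g₁(x,y). -/
def Omegaphi (F : E dx × E dy → E dx) (g : E dx × E dy → ℝ)
    (φ : E dx × E dy → E dx) (φinv : E dx × E dy → E dx) (x : E dx) (y : E dy) : E dy :=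
  grad2 g x y + Psiphi F φ φinv x y (grad1 g x y)


/-- Preconditioning step x̃(x,y) = x − P(x,y)⁻¹ F(x,y). -/
def xtilde (F : E dx × E dy → E dx) (P : E dx × E dy → (E dx →L[ℝ] E dx))
    (x : E dx) (y : E dy) : E dx :=
  x - Ring.inverse (P (x, y)) (F (x, y))

/-- Preconditioned formula Ωᴾ(x,y) = Ω(x̃(x,y), y). -/
def OmegaP (F : E dx × E dy → E dx) (g : E dx × E dy → ℝ)
    (P : E dx × E dy → (E dx →L[ℝ] E dx)) (x : E dx) (y : E dy) : E dy :=
  Omega F g (xtilde F P x y) y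

section Derivatives

open Asymptotics Filter Topology

variable {𝕜 X Y Z : Type*} [NontriviallyNormedField 𝕜]
  [NormedAddCommGroup X] [NormedSpace 𝕜 X] [NormedAddCommGroup Y] [NormedSpace 𝕜 Y]
  [NormedAddCommGroup Z] [NormedSpace 𝕜 Z]

theorem differentiableAt_fderiv_comp_prodMk_left {G : X × Y → Z} {x : X} {y : Y}
    (hG : ContDiffAt 𝕜 2 G (x, y)) :
    DifferentiableAt 𝕜 (fun x => fderiv 𝕜 (fun x' => G (x', y)) x) x :=
  ((hG.comp x (contDiff_prodMk_left y).contDiffAt).fderiv_right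
    one_add_one_eq_two.le).differentiableAt one_ne_zero

theorem differentiableAt_fderiv_comp_prodMk_right {G : X × Y → Z} {x : X} {y : Y}
    (hG : ContDiffAt 𝕜 2 G (x, y)) :
    DifferentiableAt 𝕜 (fun x => fderiv 𝕜 (fun y' => G (x, y')) y) x :=
  (ContDiffAt.fderiv (f := fun x y' => G (x, y')) (g := fun _ => y) hG contDiffAt_const
    one_add_one_eq_two.le).differentiableAt one_ne_zero

theorem hasFDerivAt_clm_apply_of_eq_zero {A : X → Y →L[𝕜] Z} {f : X → Y} {f' : X →L[𝕜] Y} {x : X}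
    (hA : ContinuousAt A x) (hf : HasFDerivAt f f' x) (hx : f x = 0) :
    HasFDerivAt (fun u => A u (f u)) ((A x).comp f') x := by
  have hA₀ : (fun u => A u - A x) =o[𝓝 x] (fun _ => (1 : ℝ)) :=
    (isLittleO_one_iff ℝ).2 (tendsto_sub_nhds_zero_iff.2 hA)
  have hf₀ : f =O[𝓝 x] (fun u => u - x) := by
    simpa only [hx, sub_zero] using hf.isBigO_sub
  have hvar : HasFDerivAt (fun u => (A u - A x) (f u)) (0 : X →L[𝕜] Z) x := by
    refine .of_isLittleO ?_
    have hbound : (fun u => (A u - A x) (f u)) =O[𝓝 x] (fun u => ‖A u - A x‖ * ‖f u‖) :=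
      .of_norm_le fun u => (A u - A x).le_opNorm (f u)
    have hsmall := hbound.trans_isLittleO (hA₀.norm_left.mul_isBigO hf₀.norm_norm)
    simpa [hx] using hsmall
  have hfixed : HasFDerivAt (fun u => A x (f u)) ((A x).comp f') x :=
    (A x).hasFDerivAt.comp x hf
  simpa using hvar.fun_add hfixed

end Derivatives

section PreconditionedStep

variable {𝕜 X Z : Type*} [NontriviallyNormedField 𝕜]
  [NormedAddCommGroup X] [NormedSpace 𝕜 X] [CompleteSpace X]
  [NormedAddCommGroup Z] [NormedSpace 𝕜 Z]
  {f : X → X} {f' : X →L[𝕜] X} {P : X → X →L[𝕜] X} {x : X}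

theorem hasFDerivAt_sub_inverse_apply_of_eq_zero (hP : ContinuousAt P x) (hPx : IsUnit (P x))
    (hf : HasFDerivAt f f' x) (hx : f x = 0) :
    HasFDerivAt (fun u => u - Ring.inverse (P u) (f u)) (Ring.inverse (P x) * (P x - f')) x := by
  have hinverse : ContinuousAt (fun u => Ring.inverse (P u)) x :=
    ContinuousAt.comp (differentiableAt_inverse (𝕜 := 𝕜) hPx).continuousAt hP
  have hderiv : Ring.inverse (P x) * (P x - f') = .id 𝕜 X - (Ring.inverse (P x)).comp f' := by
    rw [mul_sub, Ring.inverse_mul_cancel _ hPx]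
    rfl
  rw [hderiv]
  exact (hasFDerivAt_id x).sub (hasFDerivAt_clm_apply_of_eq_zero hinverse hf hx)

theorem norm_fderiv_comp_sub_inverse_apply_le {Φ : X → Z} (hΦ : DifferentiableAt 𝕜 Φ x)
    (hP : ContinuousAt P x) (hPx : IsUnit (P x)) (hf : HasFDerivAt f f' x) (hx : f x = 0) :
    ‖fderiv 𝕜 (fun u => Φ (u - Ring.inverse (P u) (f u))) x‖ ≤
      ‖fderiv 𝕜 Φ x‖ * ‖Ring.inverse (P x)‖ * ‖P x - f'‖ := by
  have hfix : x - Ring.inverse (P x) (f x) = x := by rw [hx, map_zero, sub_zero]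
  have hΦ' : HasFDerivAt Φ (fderiv 𝕜 Φ x) (x - Ring.inverse (P x) (f x)) := by
    rw [hfix]
    exact hΦ.hasFDerivAt
  have hcomp : fderiv 𝕜 (fun u => Φ (u - Ring.inverse (P u) (f u))) x =
      (fderiv 𝕜 Φ x).comp (Ring.inverse (P x) * (P x - f')) :=
    (hΦ'.comp x (hasFDerivAt_sub_inverse_apply_of_eq_zero hP hPx hf hx)).fderiv
  calc
    _ = ‖(fderiv 𝕜 Φ x).comp (Ring.inverse (P x) * (P x - f'))‖ := by rw [hcomp]
    _ ≤ ‖fderiv 𝕜 Φ x‖ * ‖Ring.inverse (P x) * (P x - f')‖ := opNorm_comp_le _ _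
    _ ≤ ‖fderiv 𝕜 Φ x‖ * (‖Ring.inverse (P x)‖ * ‖P x - f'‖) := by gcongr; exact norm_mul_le _ _
    _ = _ := (mul_assoc _ _ _).symm

end PreconditionedStep

section Hilbert

variable {V H K : Type*} [NormedAddCommGroup V] [NormedSpace ℝ V]
  [NormedAddCommGroup H] [InnerProductSpace ℝ H] [CompleteSpace H]
  [NormedAddCommGroup K] [InnerProductSpace ℝ K] [CompleteSpace K]

-- Over `ℝ` the conjugate-linear isometries `adjoint` and `toDual` are linear by unfolding.
theorem differentiable_adjoint : Differentiable ℝ fun A : H →L[ℝ] K => adjoint A :=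
  LinearIsometryEquiv.differentiable (𝕜 := ℝ) (adjoint : (H →L[ℝ] K) ≃ₗᵢ⋆[ℝ] (K →L[ℝ] H))

theorem differentiableAt_gradient_of_fderiv {f : V → H → ℝ} {c : V → H} {v : V}
    (hf : DifferentiableAt ℝ (fun u => fderiv ℝ (f u) (c u)) v) :
    DifferentiableAt ℝ (fun u => gradient (f u) (c u)) v :=
  (LinearIsometryEquiv.differentiable (𝕜 := ℝ) (InnerProductSpace.toDual ℝ H).symm _).comp v hf

end Hilbert

section Omega

variable {F : E dx × E dy → E dx} {g : E dx × E dy → ℝ} {x : E dx} {y : E dy}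

theorem differentiableAt_Omega (hF : ContDiffAt ℝ 2 F (x, y)) (hg : ContDiffAt ℝ 2 g (x, y))
    (hinv : IsUnit (pd1 F x y)) : DifferentiableAt ℝ (fun x => Omega F g x y) x := by
  have hg₁ : DifferentiableAt ℝ (fun x => grad1 g x y) x :=
    differentiableAt_gradient_of_fderiv (differentiableAt_fderiv_comp_prodMk_left hg)
  have hg₂ : DifferentiableAt ℝ (fun x => grad2 g x y) x :=
    differentiableAt_gradient_of_fderiv (differentiableAt_fderiv_comp_prodMk_right hg)
  have hF₁ : DifferentiableAt ℝ (fun x => adjoint (pd1 F x y)) x :=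
    (differentiable_adjoint _).comp x (differentiableAt_fderiv_comp_prodMk_left hF)
  have hF₂ : DifferentiableAt ℝ (fun x => adjoint (pd2 F x y)) x :=
    (differentiable_adjoint _).comp x (differentiableAt_fderiv_comp_prodMk_right hF)
  have hΨ : DifferentiableAt ℝ (fun x => Psi F x y) x :=
    (hF₂.clm_comp (hF₁.inverse hinv.star)).neg
  exact hg₂.add (hΨ.clm_apply hg₁)

theorem norm_fderiv_OmegaP_le {P : E dx × E dy → (E dx →L[ℝ] E dx)}
    (hF : ContDiffAt ℝ 2 F (x, y)) (hg : ContDiffAt ℝ 2 g (x, y)) (hinv : IsUnit (pd1 F x y))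
    (hroot : F (x, y) = 0) (hP : ContinuousAt (fun x => P (x, y)) x) (hPinv : IsUnit (P (x, y))) :
    ‖fderiv ℝ (fun x => OmegaP F g P x y) x‖ ≤
      ‖fderiv ℝ (fun x => Omega F g x y) x‖ * ‖Ring.inverse (P (x, y))‖ *
        ‖P (x, y) - pd1 F x y‖ := by
  have hF₁ : HasFDerivAt (fun x => F (x, y)) (pd1 F x y) x :=
    ((hF.comp x (contDiff_prodMk_left y).contDiffAt).differentiableAt two_ne_zero).hasFDerivAt
  exact norm_fderiv_comp_sub_inverse_apply_le (Φ := fun x => Omega F g x y)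
    (differentiableAt_Omega hF hg hinv) hP hPinv hF₁ hroot

end Omega

-- `L` stands for the derivative at the root of any formula compared with `Ωᴾ`, such as `Ωᶠ`.
theorem stmt14_general {F : E dx × E dy → E dx} {g : E dx × E dy → ℝ}
    {P : E dx × E dy → (E dx →L[ℝ] E dx)} {x : E dx} {y : E dy}
    (hF : ContDiffAt ℝ 2 F (x, y)) (hg : ContDiffAt ℝ 2 g (x, y)) (hinv : IsUnit (pd1 F x y))
    (hroot : F (x, y) = 0) (hP : ContinuousAt (fun x => P (x, y)) x) (hPinv : IsUnit (P (x, y)))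
    (L : E dx →L[ℝ] E dy) {v : E dx} (hv : ‖v‖ ≤ 1) :
    ‖L‖ ^ 2 - ‖fderiv ℝ (fun x => OmegaP F g P x y) x‖ ^ 2 ≥
      ‖L v‖ ^ 2 - ‖fderiv ℝ (fun x => Omega F g x y) x‖ ^ 2 *
        ‖Ring.inverse (P (x, y))‖ ^ 2 * ‖P (x, y) - pd1 F x y‖ ^ 2 := by
  have hL : ‖L v‖ ≤ ‖L‖ := L.unit_le_opNorm v hv
  have hΩP := norm_fderiv_OmegaP_le hF hg hinv hroot hP hPinv
  rw [ge_iff_le, ← mul_pow, ← mul_pow]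
  gcongr

/-- asymptotic superiority of preconditioning. -/
theorem stmt14 (dx dy : ℕ) (hdx : 0 < dx) (hdy : 0 < dy)
    (F : E dx × E dy → E dx) (g : E dx × E dy → ℝ)
    (hF : ContDiff ℝ (⊤ : ℕ∞) F) (hg : ContDiff ℝ (⊤ : ℕ∞) g)
    (hinv : ∀ (x : E dx) (y : E dy), IsUnit (pd1 F x y))
    (xs : E dy → E dx) (hxs : Differentiable ℝ xs)
    (hroot : ∀ y : E dy, F (xs y, y) = 0)
    (P : E dx × E dy → (E dx →L[ℝ] E dx)) (hP : ContDiff ℝ 1 P)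
    (hPinv : ∀ (x : E dx) (y : E dy), IsUnit (P (x, y)))
    (φ : E dx × E dy → E dx) (hφ : ContDiff ℝ (⊤ : ℕ∞) φ)
    (φinv : E dx × E dy → E dx) (hφinv : ContDiff ℝ (⊤ : ℕ∞) φinv)
    (hleft : ∀ (z : E dx) (y : E dy), φinv (φ (z, y), y) = z)
    (hright : ∀ (x : E dx) (y : E dy), φ (φinv (x, y), y) = x)
    (hphi1 : ∀ (z : E dx) (y : E dy), IsUnit (pd1 φ z y)) :
    ∀ (y : E dy) (vP : E dx), ‖vP‖ = 1 →
      ‖fderiv ℝ (fun x => OmegaP F g P x y) (xs y) vP‖ =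
        ‖fderiv ℝ (fun x => OmegaP F g P x y) (xs y)‖ →
      ‖fderiv ℝ (fun x => Omegaphi F g φ φinv x y) (xs y)‖ ^ 2 -
        ‖fderiv ℝ (fun x => OmegaP F g P x y) (xs y)‖ ^ 2 ≥
      ‖fderiv ℝ (fun x => Omegaphi F g φ φinv x y) (xs y) vP‖ ^ 2 -
        ‖fderiv ℝ (fun x => Omega F g x y) (xs y)‖ ^ 2 *
          ‖Ring.inverse (P (xs y, y))‖ ^ 2 *
          ‖P (xs y, y) - pd1 F (xs y) y‖ ^ 2 := by
  intro y vP hvP _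
  exact stmt14_general (contDiff_infty.1 hF 2).contDiffAt (contDiff_infty.1 hg 2).contDiffAt
    (hinv _ y) (hroot y) (hP.continuous.comp (.prodMk_left y)).continuousAt (hPinv _ y) _ hvP.le
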